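/- β_b(G) ≥ r if and only if for every symmetric pair (A,B) of subsets of V' and every subset X ⊆ V', b(A∩X) − b(B∩X) ≤ r⁻¹·w(E'(X, V'∖X)). (This displayed condition says precisely that every s⁺–s⁻ cut of the auxiliary network N_{A,B,r} has capacity at least b(A), which by the max-flow min-cut theorem is the r-well-linkedness of G'.) -/

import Mathlib

/-!
A set `X ⊆ V'` is encoded by the indicators `p i = [i⁺ ∈ X]` and `q i = [i⁻ ∈ X]`. By symmetry of `w`,
the cut weight of `X` is `½ ∑ i j, w i j * (|p i - q j| + |p j - q i|)` (`cutW_eq_half`), and for the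
symmetric pair given by `L, R` the left-hand side of the cut condition is
`∑ i, b i * ([i ∈ L] - [i ∈ R]) * (p i - q i)` (`bSum_sub_eq`).

If `β_b(G) ≥ r`, apply it to `x = p - q ∈ {0, ±1}^V`: the triangle inequality
`|x i + x j| ≤ |p i - q j| + |p j - q i|` bounds the numerator of `β_b(x)` by the cut weight, while
the left-hand side of the cut condition is at most `∑ i, b i * |x i|`.

Conversely, given `x`, take `L = {x = 1}`, `R = {x = -1}` and `X = A = L⁺ ∪ R⁻`. Then `p` and `q` are
the indicators of `L` and `R`, and both estimates are equalities.
-/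

open Finset

/-- Edge weights of the auxiliary bipartite graph `G'` on `V⁺ ⊕ V⁻`. -/
noncomputable def auxW {V : Type*} (w : V → V → ℝ) : V ⊕ V → V ⊕ V → ℝ
  | Sum.inl i, Sum.inr j => w i j
  | Sum.inr i, Sum.inl j => w i j
  | _, _ => 0

/-- Vertex weights on `V' = V⁺ ⊕ V⁻` induced by `b`. -/
noncomputable def auxB {V : Type*} (b : V → ℝ) : V ⊕ V → ℝ := Sum.elim b b

/-- `β_b(x)`. -/
noncomputable def betaB {V : Type*} [Fintype V] (w : V → V → ℝ) (b : V → ℝ) (x : V → ℝ) : ℝ :=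
  ((1 / 2) * ∑ i, ∑ j, w i j * |x i + x j|) / (∑ i, b i * |x i|)

/-- `w(E'(X, V'∖X))`. -/
noncomputable def cutW {V : Type*} [Fintype V] [DecidableEq V] (w : V → V → ℝ)
    (X : Finset (V ⊕ V)) : ℝ :=
  ∑ u ∈ X, ∑ v ∈ Xᶜ, auxW w u v

/-- `b(S)` for `S ⊆ V'`. -/
noncomputable def bSum {V : Type*} (b : V → ℝ) (S : Finset (V ⊕ V)) : ℝ :=
  ∑ u ∈ S, auxB b u

section

variable {V : Type*} [Fintype V] [DecidableEq V]

/-- The indicator of `X ⊆ V'` on `V⁺`. -/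
noncomputable def indPos (X : Finset (V ⊕ V)) (i : V) : ℝ := if Sum.inl i ∈ X then 1 else 0

/-- The indicator of `X ⊆ V'` on `V⁻`. -/
noncomputable def indNeg (X : Finset (V ⊕ V)) (i : V) : ℝ := if Sum.inr i ∈ X then 1 else 0

/-- Orientation-by-orientation form of the cut weight: the edges leaving `X` from `V⁺`, then those
leaving it from `V⁻`. -/
lemma cutW_eq (w : V → V → ℝ) (X : Finset (V ⊕ V)) :
    cutW w X = (∑ i, ∑ j, w i j * (indPos X i * (1 - indNeg X j)))
      + ∑ i, ∑ j, w i j * (indNeg X i * (1 - indPos X j)) := by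
  have h : cutW w X = ∑ u, ∑ v, if u ∈ X ∧ v ∉ X then auxW w u v else 0 := by
    rw [cutW, ← Fintype.sum_ite_mem X]
    refine Finset.sum_congr rfl fun u _ => ?_
    rw [← Fintype.sum_ite_mem Xᶜ]
    by_cases hu : u ∈ X <;> simp [hu]
  rw [h]
  simp only [Fintype.sum_sum_type, auxW, ite_self, Finset.sum_const_zero, zero_add, add_zero]
  congr 1 <;>
  · refine Finset.sum_congr rfl fun i _ => Finset.sum_congr rfl fun j _ => ?_
    unfold indPos indNeg
    split_ifs <;> simp_all

lemma cutW_eq_half (w : V → V → ℝ) (hw_symm : ∀ i j, w i j = w j i) (X : Finset (V ⊕ V)) :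
    cutW w X = (1 / 2) * ∑ i, ∑ j,
      w i j * (|indPos X i - indNeg X j| + |indPos X j - indNeg X i|) := by
  have hswap : ∀ f : V → V → ℝ, ∑ i, ∑ j, w i j * f i j = ∑ i, ∑ j, w i j * f j i := by
    intro f
    rw [Finset.sum_comm]
    exact Finset.sum_congr rfl fun i _ => Finset.sum_congr rfl fun j _ => by rw [hw_symm]
  have h : cutW w X = ∑ i, ∑ j, w i j * |indPos X i - indNeg X j| := by
    rw [cutW_eq, hswap (fun i j => indNeg X i * (1 - indPos X j)), ← Finset.sum_add_distrib]
    refine Finset.sum_congr rfl fun i _ => ?_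
    rw [← Finset.sum_add_distrib]
    refine Finset.sum_congr rfl fun j _ => ?_
    unfold indPos indNeg
    split_ifs <;> simp
  simp only [mul_add, Finset.sum_add_distrib]
  rw [← hswap (fun i j => |indPos X i - indNeg X j|), h]
  ring

lemma bSum_sub_eq (b : V → ℝ) (L R : Finset V) (X : Finset (V ⊕ V)) (hLR : Disjoint L R) :
    bSum b (((L.image Sum.inl) ∪ (R.image Sum.inr)) ∩ X)
        - bSum b (((L.image Sum.inr) ∪ (R.image Sum.inl)) ∩ X)
      = ∑ i, b i * (((if i ∈ L then 1 else 0) - (if i ∈ R then 1 else 0))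
          * (indPos X i - indNeg X i)) := by
  have h : ∀ S : Finset (V ⊕ V), bSum b S
      = ∑ i, ((if Sum.inl i ∈ S then b i else 0) + (if Sum.inr i ∈ S then b i else 0)) := by
    intro S
    rw [Finset.sum_add_distrib, bSum,
      ← Fintype.sum_ite_mem S (auxB b), Fintype.sum_sum_type]
    rfl
  rw [h, h, ← Finset.sum_sub_distrib]
  refine Finset.sum_congr rfl fun i _ => ?_
  have hi : ¬ (i ∈ L ∧ i ∈ R) := fun hh => Finset.disjoint_left.mp hLR hh.1 hh.2
  unfold indPos indNeg
  by_cases h1 : i ∈ L <;> by_cases h2 : i ∈ R <;> by_cases h3 : Sum.inl i ∈ X <;>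
    by_cases h4 : Sum.inr i ∈ X <;> simp_all

end

lemma sum_abs_pos {V : Type*} [Fintype V] (b : V → ℝ) (hb : ∀ i, 0 < b i) (x : V → ℝ) (hx : x ≠ 0) :
    0 < ∑ i, b i * |x i| := by
  obtain ⟨i, hi⟩ := Function.ne_iff.mp hx
  exact Finset.sum_pos' (fun j _ => mul_nonneg (hb j).le (abs_nonneg _))
    ⟨i, Finset.mem_univ i, mul_pos (hb i) (abs_pos.mpr hi)⟩

/-- `β_b(G) ≥ r` iff for every symmetric pair `(A,B)`
(`A = L⁺ ∪ R⁻`, `B = L⁻ ∪ R⁺` with `L, R` disjoint) and every `X ⊆ V'`,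
`b(A∩X) − b(B∩X) ≤ r⁻¹·w(E'(X, V'∖X))`. -/
theorem stmt_2 {V : Type*} [Fintype V] [DecidableEq V]
    (w : V → V → ℝ) (hw_symm : ∀ i j, w i j = w j i) (hw_nonneg : ∀ i j, 0 ≤ w i j)
    (hw_loop : ∀ i, w i i = 0)
    (b : V → ℝ) (hb : ∀ i, 0 < b i)
    (r : ℝ) (hr : 0 < r) :
    (∀ x : V → ℝ, (∀ i, x i = 0 ∨ x i = 1 ∨ x i = -1) → x ≠ 0 → r ≤ betaB w b x) ↔
    (∀ L R : Finset V, Disjoint L R → ∀ X : Finset (V ⊕ V),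
      bSum b (((L.image Sum.inl) ∪ (R.image Sum.inr)) ∩ X)
        - bSum b (((L.image Sum.inr) ∪ (R.image Sum.inl)) ∩ X)
        ≤ r⁻¹ * cutW w X) := by
  constructor
  · intro h L R hLR X
    rw [bSum_sub_eq b L R X hLR, cutW_eq_half w hw_symm, le_inv_mul_iff₀ hr]
    set x : V → ℝ := fun i => indPos X i - indNeg X i with hxdef
    have hA : ∑ i, b i * (((if i ∈ L then 1 else 0) - (if i ∈ R then 1 else 0))
        * (indPos X i - indNeg X i)) ≤ ∑ i, b i * |x i| := by
      refine Finset.sum_le_sum fun i _ => mul_le_mul_of_nonneg_left ?_ (hb i).le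
      have h1 := le_abs_self (x i)
      have h2 := neg_le_abs (x i)
      have h3 := abs_nonneg (x i)
      change _ * x i ≤ |x i|
      split_ifs <;> linarith
    have hB : (1 / 2) * ∑ i, ∑ j, w i j * |x i + x j| ≤ (1 / 2) * ∑ i, ∑ j,
        w i j * (|indPos X i - indNeg X j| + |indPos X j - indNeg X i|) := by
      refine mul_le_mul_of_nonneg_left (Finset.sum_le_sum fun i _ => Finset.sum_le_sum fun j _ =>
        mul_le_mul_of_nonneg_left ?_ (hw_nonneg i j)) (by norm_num)
      refine le_trans (le_of_eq ?_) (abs_add_le _ _)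
      congr 1
      simp only [hxdef]
      ring
    refine (mul_le_mul_of_nonneg_left hA hr.le).trans (le_trans ?_ hB)
    by_cases hx : x = 0
    · simp [hx]
    · have hβ := h x (fun i => by
        simp only [hxdef, indPos, indNeg]
        split_ifs <;> simp) hx
      rwa [betaB, le_div_iff₀ (sum_abs_pos b hb x hx)] at hβ
  · intro h x hx hx0
    rw [betaB, le_div_iff₀ (sum_abs_pos b hb x hx0)]
    set L : Finset V := Finset.univ.filter fun i => x i = 1 with hL
    set R : Finset V := Finset.univ.filter fun i => x i = -1 with hR
    have hLR : Disjoint L R := by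
      refine Finset.disjoint_left.mpr fun i h1 h2 => ?_
      simp only [hL, hR, Finset.mem_filter, Finset.mem_univ, true_and] at h1 h2
      linarith
    have hp : ∀ i, indPos ((L.image Sum.inl) ∪ (R.image Sum.inr)) i
        = if x i = 1 then 1 else 0 := fun i => by simp [indPos, hL]
    have hq : ∀ i, indNeg ((L.image Sum.inl) ∪ (R.image Sum.inr)) i
        = if x i = -1 then 1 else 0 := fun i => by simp [indNeg, hR]
    have key := h L R hLR ((L.image Sum.inl) ∪ (R.image Sum.inr))
    rw [bSum_sub_eq b L R _ hLR, cutW_eq_half w hw_symm, le_inv_mul_iff₀ hr] at key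
    simp only [hp, hq] at key
    convert key using 2
    · refine Finset.sum_congr rfl fun i _ => ?_
      rcases hx i with hi | hi | hi <;> simp [hL, hR, hi] <;> norm_num
    · refine Finset.sum_congr rfl fun i _ => Finset.sum_congr rfl fun j _ => ?_
      rcases hx i with hi | hi | hi <;> rcases hx j with hj | hj | hj <;>
        simp [hi, hj] <;> norm_num
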